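/- Let M be a linear tree-to-word transducer, let q be a state of M whose output language L_q is quasi-periodic on the left with period w, and let q' be a state accessible from q. Then L_{q'} is quasi-periodic, and its period is either the empty word ε or a cyclic rotation (shift) of w. -/

import Mathlib

namespace LTWpaper

/-- Trees over a ranked alphabet: a symbol of arity `n` with `n` children. -/
inductive RTree (F : Type) (ar : F → ℕ) : Type
  | node (f : F) (ts : Fin (ar f) → RTree F ar) : RTree F ar

/-- A rule right-hand side `u₀ q₁(x_{σ(1)}) u₁ … q_n(x_{σ(n)}) u_n`:
`word i` is `u_i` (for `i : Fin (n+1)`), `st i` is `q_{i+1}` (for `i : Fin n`),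
and position `i` reads the subtree `x_{perm i}`. -/
structure LTWRule (Δ Q : Type) (n : ℕ) where
  word : Fin (n + 1) → List Δ
  st : Fin n → Q
  perm : Equiv.Perm (Fin n)

/-- A (deterministic) linear tree-to-word transducer with axiom `pre init(x) post`. -/
structure LTW (F : Type) (ar : F → ℕ) (Δ Q : Type) where
  pre : List Δ
  init : Q
  post : List Δ
  rules : Q → (f : F) → Option (LTWRule Δ Q (ar f))

/-- `u 0 ++ ws 0 ++ u 1 ++ ws 1 ++ ⋯ ++ ws (n-1) ++ u n`. -/
def interleave {Δ : Type} (n : ℕ) (u : Fin (n + 1) → List Δ) (ws : Fin n → List Δ) :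
    List Δ :=
  u 0 ++ (List.finRange n).foldr (fun i acc => ws i ++ u i.succ ++ acc) []

/-- The partial function `⟦M⟧_q` computed by state `q`. -/
def LTW.semState {F Δ Q : Type} {ar : F → ℕ} (M : LTW F ar Δ Q) :
    RTree F ar → Q → Option (List Δ)
  | .node f ts, q =>
    match M.rules q f with
    | none => none
    | some r =>
      if h : ∀ i : Fin (ar f), (M.semState (ts (r.perm i)) (r.st i)).isSome then
        some (interleave (ar f) r.word fun i => (M.semState (ts (r.perm i)) (r.st i)).get (h i))
      else none

/-- The partial function `⟦M⟧` computed by the transducer. -/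
def LTW.sem {F Δ Q : Type} {ar : F → ℕ} (M : LTW F ar Δ Q) (t : RTree F ar) :
    Option (List Δ) :=
  (M.semState t M.init).map fun w => M.pre ++ w ++ M.post

/-- The output language `L_q` of a state. -/
def LTW.lang {F Δ Q : Type} {ar : F → ℕ} (M : LTW F ar Δ Q) (q : Q) : Set (List Δ) :=
  {w | ∃ t, M.semState t q = some w}

/-- Standing assumption: every state has nonempty domain. -/
def LTW.NonemptyDoms {F Δ Q : Type} {ar : F → ℕ} (M : LTW F ar Δ Q) : Prop :=
  ∀ q : Q, ∃ t w, M.semState t q = some w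

/-- `w^n`, the `n`-fold concatenation of the word `w`. -/
def listPow {Δ : Type} (w : List Δ) : ℕ → List Δ
  | 0 => []
  | n + 1 => w ++ listPow w n

/-- `lcp L = ε`: the only common prefix of all words of `L` is the empty word. -/
def LcpEps {Δ : Type} (L : Set (List Δ)) : Prop :=
  ∀ w : List Δ, (∀ v ∈ L, w <+: v) → w = []

/-- `lcs L = ε`: the only common suffix of all words of `L` is the empty word. -/
def LcsEps {Δ : Type} (L : Set (List Δ)) : Prop :=
  ∀ w : List Δ, (∀ v ∈ L, w <:+ v) → w = []

/-- A language is earliest if `lcp L = lcs L = ε`. -/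
def EarliestLang {Δ : Type} (L : Set (List Δ)) : Prop := LcpEps L ∧ LcsEps L

/-- `L ⊆ w*`. -/
def SubPow {Δ : Type} (w : List Δ) (L : Set (List Δ)) : Prop :=
  ∀ v ∈ L, ∃ n : ℕ, v = listPow w n

/-- `L` is periodic of period `w`: `w` is a smallest word with `L ⊆ w*`. -/
def PeriodicOf {Δ : Type} (L : Set (List Δ)) (w : List Δ) : Prop :=
  SubPow w L ∧ ∀ w' : List Δ, SubPow w' L → w.length ≤ w'.length

/-- `L` is periodic. -/
def Periodic {Δ : Type} (L : Set (List Δ)) : Prop := ∃ w, PeriodicOf L w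

/-- `L` is quasi-periodic on the left of handle `u` and period `w`:
`w` is a smallest word with `L ⊆ u w*`. -/
def QPLeftOf {Δ : Type} (L : Set (List Δ)) (u w : List Δ) : Prop :=
  (∀ v ∈ L, ∃ n : ℕ, v = u ++ listPow w n) ∧
  ∀ w' : List Δ, (∀ v ∈ L, ∃ n : ℕ, v = u ++ listPow w' n) → w.length ≤ w'.length

/-- `L` is quasi-periodic on the right of handle `u` and period `w`:
`w` is a smallest word with `L ⊆ w* u`. -/
def QPRightOf {Δ : Type} (L : Set (List Δ)) (u w : List Δ) : Prop :=
  (∀ v ∈ L, ∃ n : ℕ, v = listPow w n ++ u) ∧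
  ∀ w' : List Δ, (∀ v ∈ L, ∃ n : ℕ, v = listPow w' n ++ u) → w.length ≤ w'.length

/-- `L` is quasi-periodic (on the left or on the right). -/
def QuasiPeriodic {Δ : Type} (L : Set (List Δ)) : Prop :=
  (∃ u w, QPLeftOf L u w) ∨ (∃ u w, QPRightOf L u w)

/-- The language `L u = { v u : v ∈ L }`. -/
def appendLang {Δ : Type} (L : Set (List Δ)) (u : List Δ) : Set (List Δ) :=
  {v | ∃ x ∈ L, v = x ++ u}

/-- The language `L₁ u L₂ = { a u b : a ∈ L₁, b ∈ L₂ }`. -/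
def pairLang {Δ : Type} (L₁ : Set (List Δ)) (u : List Δ) (L₂ : Set (List Δ)) :
    Set (List Δ) :=
  {v | ∃ a ∈ L₁, ∃ b ∈ L₂, v = a ++ u ++ b}

/-- An LTW is earliest: every state `q` satisfies `lcp L_q = lcs L_q = ε`, and in every rule
every part `qᵢ(x) uᵢ` satisfies `lcp (L_{qᵢ} uᵢ) = ε`. -/
def LTW.Earliest {F Δ Q : Type} {ar : F → ℕ} (M : LTW F ar Δ Q) : Prop :=
  (∀ q : Q, EarliestLang (M.lang q)) ∧
  ∀ (q : Q) (f : F) (r : LTWRule Δ Q (ar f)), M.rules q f = some r →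
    ∀ i : Fin (ar f), LcpEps (appendLang (M.lang (r.st i)) (r.word i.succ))

/-- An erasing state: `L_q = {ε}`. -/
def LTW.Erasing {F Δ Q : Type} {ar : F → ℕ} (M : LTW F ar Δ Q) (q : Q) : Prop :=
  M.lang q = {([] : List Δ)}

/-- Erase-ordered: in every rule, if `qᵢ` is erasing then every later `q_j` is erasing,
`σ(i) ≤ σ(j)` and `u_j = ε`. -/
def LTW.EraseOrdered {F Δ Q : Type} {ar : F → ℕ} (M : LTW F ar Δ Q) : Prop :=
  ∀ (q : Q) (f : F) (r : LTWRule Δ Q (ar f)), M.rules q f = some r →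
    ∀ i j : Fin (ar f), M.Erasing (r.st i) → i ≤ j →
      M.Erasing (r.st j) ∧ r.perm i ≤ r.perm j ∧ r.word j.succ = []

/-- Co-reachable pairs of states of two transducers over the same input alphabet. -/
inductive CoReach {F Δ Q₁ Q₂ : Type} {ar : F → ℕ}
    (M₁ : LTW F ar Δ Q₁) (M₂ : LTW F ar Δ Q₂) : Q₁ → Q₂ → Prop
  | base : CoReach M₁ M₂ M₁.init M₂.init
  | step {q₁ : Q₁} {q₂ : Q₂} {f : F} {r₁ : LTWRule Δ Q₁ (ar f)} {r₂ : LTWRule Δ Q₂ (ar f)}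
      {i j : Fin (ar f)} :
      CoReach M₁ M₂ q₁ q₂ → M₁.rules q₁ f = some r₁ → M₂.rules q₂ f = some r₂ →
      r₁.perm i = r₂.perm j → CoReach M₁ M₂ (r₁.st i) (r₂.st j)

/-- Two LTWs are same-ordered: co-reachable states either both lack a rule for `f`,
or have rules for `f` with the same permutation. -/
def SameOrdered {F Δ Q₁ Q₂ : Type} {ar : F → ℕ}
    (M₁ : LTW F ar Δ Q₁) (M₂ : LTW F ar Δ Q₂) : Prop :=
  ∀ q₁ q₂, CoReach M₁ M₂ q₁ q₂ → ∀ f : F,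
    (M₁.rules q₁ f = none ∧ M₂.rules q₂ f = none) ∨
    ∃ (r₁ : LTWRule Δ Q₁ (ar f)) (r₂ : LTWRule Δ Q₂ (ar f)),
      M₁.rules q₁ f = some r₁ ∧ M₂.rules q₂ f = some r₂ ∧ r₁.perm = r₂.perm

/-- `Accessible q p`: state `p` is accessible from state `q`. -/
inductive LTW.Accessible {F Δ Q : Type} {ar : F → ℕ} (M : LTW F ar Δ Q) : Q → Q → Prop
  | refl (q : Q) : M.Accessible q q
  | step {q p : Q} {f : F} {r : LTWRule Δ Q (ar f)} (i : Fin (ar f)) :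
      M.Accessible q p → M.rules p f = some r → M.Accessible q (r.st i)

/-- Partial normal form. -/
def LTW.PartialNormalForm {F Δ Q : Type} {ar : F → ℕ} (M : LTW F ar Δ Q) : Prop :=
  (∀ q : Q, QuasiPeriodic (M.lang q) → EarliestLang (M.lang q)) ∧
  M.EraseOrdered ∧
  ∀ (q : Q) (f : F) (r : LTWRule Δ Q (ar f)), M.rules q f = some r →
    ∀ (i : ℕ) (hi : i + 1 < ar f),
      QuasiPeriodic (pairLang (M.lang (r.st ⟨i, Nat.lt_of_succ_lt hi⟩))
          (r.word (Fin.succ ⟨i, Nat.lt_of_succ_lt hi⟩)) (M.lang (r.st ⟨i + 1, hi⟩))) →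
      EarliestLang (pairLang (M.lang (r.st ⟨i, Nat.lt_of_succ_lt hi⟩))
          (r.word (Fin.succ ⟨i, Nat.lt_of_succ_lt hi⟩)) (M.lang (r.st ⟨i + 1, hi⟩))) ∧
      r.perm ⟨i, Nat.lt_of_succ_lt hi⟩ < r.perm ⟨i + 1, hi⟩

theorem listPow_add {Δ : Type} (w : List Δ) (m n : ℕ) :
    listPow w (m + n) = listPow w m ++ listPow w n := by
  induction m with
  | zero => simp [listPow]
  | succ k ih => rw [Nat.succ_add]; simp [listPow, ih]

theorem listPow_mul {Δ : Type} (w : List Δ) (m n : ℕ) :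
    listPow w (m * n) = listPow (listPow w m) n := by
  induction n with
  | zero => simp [listPow]
  | succ k ih => rw [Nat.mul_succ, Nat.add_comm, listPow_add, ih]; simp [listPow]

theorem listPow_length {Δ : Type} (w : List Δ) (n : ℕ) :
    (listPow w n).length = n * w.length := by
  induction n with
  | zero => simp [listPow]
  | succ k ih => simp [listPow, ih, Nat.succ_mul, Nat.add_comm]

theorem listPow_nil {Δ : Type} (n : ℕ) : listPow ([] : List Δ) n = [] := by
  induction n with
  | zero => rfl
  | succ k ih => simp [listPow, ih]

theorem listPow_one {Δ : Type} (w : List Δ) : listPow w 1 = w := by simp [listPow]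

/-- `y b = b x` gives `y^k b = b x^k`. -/
theorem conj_pow {Δ : Type} {y b x : List Δ} (h : y ++ b = b ++ x) (k : ℕ) :
    listPow y k ++ b = b ++ listPow x k := by
  induction k with
  | zero => simp [listPow]
  | succ k ih =>
    simp only [listPow, List.append_assoc, ih]
    rw [← List.append_assoc, h, List.append_assoc]

theorem suffix_pow {Δ : Type} {w : List Δ} (e : ℕ) (b : List Δ) (h : b <:+ listPow w e) :
    ∃ (p s : List Δ) (j : ℕ), w = p ++ s ∧ b = s ++ listPow w j := by
  induction e with
  | zero =>
    refine ⟨w, [], 0, by simp, ?_⟩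
    simpa [listPow] using h
  | succ k ih =>
    simp only [listPow] at h
    obtain ⟨c, hc⟩ := h
    rcases List.append_eq_append_iff.1 hc with ⟨s, h1, h2⟩ | ⟨s, h1, h2⟩
    · exact ⟨c, s, k, h1, h2⟩
    · exact ih ⟨s, h2.symm⟩

theorem commute_root {Δ : Type} : ∀ (N : ℕ) (x y : List Δ), x.length + y.length ≤ N →
    x ++ y = y ++ x → ∃ r e f, x = listPow r e ∧ y = listPow r f := by
  intro N
  induction N with
  | zero =>
    intro x y hN _
    refine ⟨[], 0, 0, ?_, ?_⟩ <;> apply List.eq_nil_of_length_eq_zero <;> omega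
  | succ N ih =>
    intro x y hN h
    by_cases hx : x = []
    · exact ⟨y, 0, 1, by simp [hx, listPow], by simp [listPow]⟩
    by_cases hy : y = []
    · exact ⟨x, 1, 0, by simp [listPow], by simp [hy, listPow]⟩
    have hx' := List.length_pos_iff.2 hx
    have hy' := List.length_pos_iff.2 hy
    rcases Nat.le_total x.length y.length with hl | hl
    · have : x <+: y := List.prefix_of_prefix_length_le (List.prefix_append x y)
        (h ▸ List.prefix_append y x) hl
      obtain ⟨z, rfl⟩ := this
      have hz : x ++ z = z ++ x := by
        rw [List.append_assoc] at h; exact List.append_cancel_left h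
      simp only [List.length_append] at hN
      obtain ⟨r, e, f, h1, h2⟩ := ih x z (by omega) hz
      exact ⟨r, e, e + f, h1, by rw [listPow_add, ← h1, ← h2]⟩
    · have : y <+: x := List.prefix_of_prefix_length_le (List.prefix_append y x)
        (h ▸ List.prefix_append x y) hl
      obtain ⟨z, rfl⟩ := this
      have hz : z ++ y = y ++ z := by
        rw [List.append_assoc] at h; exact List.append_cancel_left h
      simp only [List.length_append] at hN
      obtain ⟨r, e, f, h1, h2⟩ := ih z y (by omega) hz
      exact ⟨r, f + e, f, by rw [listPow_add, ← h1, ← h2], h2⟩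

/-- `y W = W y` with `W ≠ []` : `y` is a prefix of a power of `W`. -/
theorem prefix_pow_of_comm {Δ : Type} {y W : List Δ} (h : y ++ W = W ++ y) (N : ℕ)
    (hN : y.length ≤ (listPow W N).length) : y <+: listPow W N := by
  have h1 : listPow W N ++ y = y ++ listPow W N := conj_pow h.symm N
  exact List.prefix_of_prefix_length_le (h1 ▸ List.prefix_append y _)
    (List.prefix_append _ y) hN

theorem comm_self_pow {Δ : Type} (x : List Δ) (k : ℕ) :
    x ++ listPow x k = listPow x k ++ x := (conj_pow rfl k).symm

theorem commute_of_pow_eq {Δ : Type} {x z : List Δ} {k m : ℕ}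
    (h : listPow x k = listPow z m) (hne : listPow x k ≠ []) : x ++ z = z ++ x := by
  have hx := comm_self_pow x k
  have hz := comm_self_pow z m
  rw [← h] at hz
  generalize listPow x k = W at *
  have hW := List.length_pos_iff.2 hne
  have h1 : (x ++ z) ++ W = W ++ (x ++ z) := by
    rw [List.append_assoc, hz, ← List.append_assoc, hx, List.append_assoc]
  have h2 : (z ++ x) ++ W = W ++ (z ++ x) := by
    rw [List.append_assoc, hx, ← List.append_assoc, hz, List.append_assoc]
  have hl : x.length + z.length ≤ (x.length + z.length) * W.length :=
    Nat.le_mul_of_pos_right _ hW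
  have p1 := prefix_pow_of_comm h1 (x.length + z.length)
    (by rw [listPow_length, List.length_append]; exact hl)
  have p2 := prefix_pow_of_comm h2 (x.length + z.length)
    (by rw [listPow_length, List.length_append]; omega)
  exact (List.prefix_of_prefix_length_le p1 p2 (by simp [Nat.add_comm])).eq_of_length
    (by simp [Nat.add_comm])

theorem foldr_ctx {Δ : Type} {n : ℕ} (g : Fin n → List Δ) (ws : Fin n → List Δ) (i : Fin n)
    (l : List (Fin n)) (hl : l.Nodup) : 
    (i ∉ l → ∀ v, l.foldr (fun j acc => Function.update ws i v j ++ g j ++ acc) [] =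
      l.foldr (fun j acc => ws j ++ g j ++ acc) []) ∧
    (i ∈ l → ∃ a b, ∀ v,
      l.foldr (fun j acc => Function.update ws i v j ++ g j ++ acc) [] = a ++ v ++ b) := by
  induction l with
  | nil => simp
  | cons j l ih =>
    obtain ⟨hj, hl⟩ := List.nodup_cons.1 hl
    obtain ⟨ih1, ih2⟩ := ih hl
    constructor
    · intro hi v
      simp only [List.mem_cons, not_or] at hi
      simp only [List.foldr_cons]
      rw [ih1 hi.2, Function.update_of_ne (Ne.symm hi.1)]
    · intro hi
      by_cases hij : i = j
      · subst hij
        refine ⟨[], g i ++ l.foldr (fun j acc => ws j ++ g j ++ acc) [], fun v => ?_⟩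
        simp only [List.foldr_cons]
        rw [ih1 hj, Function.update_self]; simp
      · obtain ⟨a, b, hab⟩ := ih2 (by simpa [hij] using hi)
        refine ⟨ws j ++ g j ++ a, b, fun v => ?_⟩
        simp only [List.foldr_cons]
        rw [hab, Function.update_of_ne (Ne.symm hij)]; simp

theorem interleave_ctx {Δ : Type} (n : ℕ) (u : Fin (n + 1) → List Δ) (ws : Fin n → List Δ)
    (i : Fin n) : ∃ a b, ∀ v, interleave n u (Function.update ws i v) = a ++ v ++ b := by
  obtain ⟨a, b, h⟩ := (foldr_ctx (fun j => u j.succ) ws i (List.finRange n)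
    (List.nodup_finRange n)).2 (List.mem_finRange i)
  exact ⟨u 0 ++ a, b, fun v => by simp only [interleave, h]; simp⟩

theorem semState_node {F Δ Q : Type} {ar : F → ℕ} (M : LTW F ar Δ Q) (q : Q) (f : F)
    (r : LTWRule Δ Q (ar f)) (hr : M.rules q f = some r) (ts : Fin (ar f) → RTree F ar)
    (ws : Fin (ar f) → List Δ)
    (h : ∀ i, M.semState (ts (r.perm i)) (r.st i) = some (ws i)) :
    M.semState (.node f ts) q = some (interleave (ar f) r.word ws) := by
  rw [LTW.semState, hr]
  simp [h]

theorem ctx {F Δ Q : Type} {ar : F → ℕ} (M : LTW F ar Δ Q) (hdom : M.NonemptyDoms)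
    {q q' : Q} (hacc : M.Accessible q q') :
    ∃ a b, ∀ v ∈ M.lang q', a ++ v ++ b ∈ M.lang q := by
  induction hacc with
  | refl => exact ⟨[], [], fun v hv => by simpa using hv⟩
  | @step p f r i _ hr ih =>
    obtain ⟨a, b, hab⟩ := ih
    choose T W hTW using hdom
    obtain ⟨a', b', h'⟩ := interleave_ctx (ar f) r.word (fun j => W (r.st j)) i
    refine ⟨a ++ a', b' ++ b, fun v hv => ?_⟩
    obtain ⟨t, ht⟩ := hv
    have := hab (a' ++ v ++ b') ⟨.node f (fun k => Function.update (fun j => T (r.st j)) i t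
      (r.perm.symm k)), by
        rw [← h']
        apply semState_node M p f r hr
        intro j
        by_cases hj : j = i
        · subst hj; simp [ht]
        · simp [Function.update_of_ne hj, hTW]⟩
    simpa using this

theorem rot_prim {Δ : Type} {p s r : List Δ} {e : ℕ} (h : s ++ p = listPow r e) :
    ∃ r', r'.length = r.length ∧ p ++ s = listPow r' e := by
  obtain ⟨p', s', j, hr, hp⟩ := suffix_pow e p (h ▸ List.suffix_append s p)
  refine ⟨s' ++ p', by rw [hr]; simp [Nat.add_comm], ?_⟩
  have h1 : listPow (s' ++ p') e ++ s' = s' ++ listPow r e := by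
    apply conj_pow; rw [hr]; simp
  apply List.append_cancel_right (bs := p)
  rw [List.append_assoc, h]
  calc p ++ listPow r e = s' ++ listPow r (j + e) := by
        rw [listPow_add, ← List.append_assoc, ← hp]
    _ = (s' ++ listPow r e) ++ listPow r j := by rw [Nat.add_comm, listPow_add]; simp
    _ = _ := by rw [← h1, List.append_assoc, ← hp]

/-- if `L_q` is quasi-periodic on the left with period `w` and `q'` is
accessible from `q`, then `L_{q'}` is quasi-periodic with period `ε` or a cyclic
rotation of `w`. -/
theorem accessible_of_quasiPeriodic_left
    {F Δ Q : Type} {ar : F → ℕ} [Finite Q]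
    (M : LTW F ar Δ Q) (hdom : M.NonemptyDoms)
    {q q' : Q} {u w : List Δ}
    (hqp : QPLeftOf (M.lang q) u w)
    (hacc : M.Accessible q q') :
    ∃ u' w' : List Δ,
      (QPLeftOf (M.lang q') u' w' ∨ QPRightOf (M.lang q') u' w') ∧
      (w' = [] ∨ ∃ w₁ w₂ : List Δ, w = w₁ ++ w₂ ∧ w' = w₂ ++ w₁) := by
  classical
  obtain ⟨a, b, hab⟩ := ctx M hdom hacc
  obtain ⟨hsub, hmin⟩ := hqp
  have hL : ∀ v ∈ M.lang q', ∃ n, a ++ v ++ b = u ++ listPow w n :=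
    fun v hv => hsub _ (hab v hv)
  have hex : ∃ n, ∃ v ∈ M.lang q', a ++ v ++ b = u ++ listPow w n := by
    obtain ⟨t, v, h⟩ := hdom q'
    obtain ⟨n, hn⟩ := hL v ⟨t, h⟩
    exact ⟨n, v, ⟨t, h⟩, hn⟩
  obtain ⟨v0, hv0, h0⟩ := Nat.find_spec hex
  have hk : ∀ v ∈ M.lang q', ∃ k, v ++ b = v0 ++ b ++ listPow w k := by
    intro v hv
    obtain ⟨n, hn⟩ := hL v hv
    have hle := Nat.find_min' hex ⟨v, hv, hn⟩
    obtain ⟨k, rfl⟩ := Nat.exists_eq_add_of_le hle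
    refine ⟨k, List.append_cancel_left (as := a) ?_⟩
    rw [listPow_add, ← List.append_assoc, ← h0] at hn
    simpa using hn
  by_cases hs : ∀ v ∈ M.lang q', v = v0
  · refine ⟨v0, [], Or.inl ⟨fun v hv => ⟨0, by simp [listPow, hs v hv]⟩, by simp⟩, Or.inl rfl⟩
  push Not at hs
  obtain ⟨v1, hv1, hne⟩ := hs
  have hy : ∀ v ∈ M.lang q', ∃ k y, v = v0 ++ y ∧ y ++ b = b ++ listPow w k := by
    intro v hv
    obtain ⟨k, hk⟩ := hk v hv
    have hlen := congrArg List.length hk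
    simp only [List.length_append] at hlen
    have hp : v0 <+: v := List.prefix_of_prefix_length_le
      (l₃ := v ++ b) (by rw [hk, List.append_assoc]; exact List.prefix_append _ _)
      (List.prefix_append _ _) (by omega)
    obtain ⟨y, rfl⟩ := hp
    refine ⟨k, y, rfl, List.append_cancel_left (as := v0) ?_⟩
    simpa using hk
  obtain ⟨k1, y1, rfl, hy1⟩ := hy v1 hv1
  have hy1ne : y1 ≠ [] := by rintro rfl; simp at hne
  have hlen1 := congrArg List.length hy1
  simp only [List.length_append] at hlen1
  have hy1pos := List.length_pos_iff.2 hy1ne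
  have hbs : b <:+ listPow w (k1 * b.length) := by
    have h := conj_pow hy1 b.length
    rw [← listPow_mul] at h
    refine List.suffix_of_suffix_length_le (l₃ := b ++ listPow w (k1 * b.length))
      (h ▸ List.suffix_append _ _) (List.suffix_append _ _) ?_
    rw [listPow_mul, listPow_length]
    exact Nat.le_mul_of_pos_right _ (by omega)
  obtain ⟨p, s, j, hw, hb⟩ := suffix_pow _ b hbs
  have hrot : (s ++ p) ++ b = b ++ w := by
    have : b ++ w = s ++ (w ++ listPow w j) := by
      rw [comm_self_pow, ← List.append_assoc, ← hb]
    rw [this]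
    nth_rw 1 [hb]
    nth_rw 2 [hw]
    simp
  have hyk : ∀ k y, y ++ b = b ++ listPow w k → y = listPow (s ++ p) k := by
    intro k y h
    rw [← conj_pow hrot k] at h
    exact List.append_cancel_right h
  refine ⟨v0, s ++ p, Or.inl ⟨?_, ?_⟩, Or.inr ⟨p, s, hw, rfl⟩⟩
  · intro v hv
    obtain ⟨k, y, rfl, h⟩ := hy v hv
    exact ⟨k, by rw [hyk k y h]⟩
  · intro z hz
    obtain ⟨m, hm⟩ := hz _ hv1
    have hm : y1 = listPow z m := List.append_cancel_left hm
    have hy1' := hyk _ _ hy1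
    have hzne : z ≠ [] := by rintro rfl; exact hy1ne (by rw [hm, listPow_nil])
    have hcomm : (s ++ p) ++ z = z ++ (s ++ p) :=
      commute_of_pow_eq (k := k1) (m := m) (by rw [← hy1', hm]) (by rwa [← hy1'])
    obtain ⟨r, e, f, h1, h2⟩ := commute_root _ _ _ le_rfl hcomm
    obtain ⟨r', hr', h3⟩ := rot_prim h1
    have hwr : w.length ≤ r'.length := by
      apply hmin
      intro v hv
      obtain ⟨n, hn⟩ := hsub v hv
      exact ⟨e * n, by rw [hn, hw, h3, listPow_mul]⟩
    have hf : 0 < f := by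
      rcases Nat.eq_zero_or_pos f with rfl | h
      · exact absurd h2 hzne
      · exact h
    have : (s ++ p).length = w.length := by rw [hw]; simp [Nat.add_comm]
    rw [this, h2, listPow_length, ← hr']
    exact hwr.trans (Nat.le_mul_of_pos_left _ hf)

end LTWpaper
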